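/- arXiv:1003.5948 — 8 statements merged into one kernel-verified Lean document; each statement's English description precedes it below -/
import Mathlib

section
/- Let E be a real inner product space and f : E → ℝ a bounded function. Then the map (t, x) ↦ HJ_t f (x) is locally Lipschitz on (0, ∞) × E (with the product metric). -/
/-!
Only the `y` near `x` matter in the infimum defining `hjShift t f x`: if `|f| ≤ C` and
`‖x - y‖² ≥ 4Ct`, the competitor `y` contributes at least `-C + 2C = C`, which is no better than
what `y = x` gives. For `y` within a fixed distance `R` of `x` and times in a compact subinterval
of `(0, ∞)`, the functions `(t, x) ↦ ‖x - y‖² / (2t)` are Lipschitz with a constant that does not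
depend on `y` (`quad_le_add_mul`), and an infimum of uniformly Lipschitz functions is Lipschitz.
-/

/-- The Hamilton–Jacobi shift of `f` for time `t`:
`HJ_t f (x) = ⨅_{y} (f y + ‖x - y‖² / (2t))`. -/
noncomputable def hjShift {E : Type*} [NormedAddCommGroup E] [InnerProductSpace ℝ E]
    (t : ℝ) (f : E → ℝ) (x : E) : ℝ :=
  ⨅ y : E, (f y + ‖x - y‖ ^ 2 / (2 * t))

lemma hjShift_le {E : Type*} [NormedAddCommGroup E] [InnerProductSpace ℝ E]
    {f : E → ℝ} {C : ℝ} (hC : ∀ x, |f x| ≤ C) {t : ℝ} (ht : 0 < t) (x y : E) :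
    hjShift t f x ≤ f y + ‖x - y‖ ^ 2 / (2 * t) := by
  refine ciInf_le (f := fun y : E => f y + ‖x - y‖ ^ 2 / (2 * t)) ⟨-C, ?_⟩ y
  rintro _ ⟨w, rfl⟩
  have h1 := (abs_le.1 (hC w)).1
  have h2 : 0 ≤ ‖x - w‖ ^ 2 / (2 * t) := by positivity
  simp only
  linarith

/-- One-sided Lipschitz estimate for `(t, v) ↦ v² / (2t)` between `(t, v)` and `(s, u)`, for times
`≥ a` and `v ≤ R`: `d` bounds the increments `u - v` and `t - s`, and `d ≤ 2a` absorbs the term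
`d²`. -/
lemma quad_le_add_mul {a s t u v d R : ℝ} (ha : 0 < a) (hs : a ≤ s) (ht : a ≤ t)
    (hu : 0 ≤ u) (hv : 0 ≤ v) (hvR : v ≤ R) (hd : 0 ≤ d) (hda : d ≤ 2 * a)
    (huv : u ≤ v + d) (hst : t - s ≤ d) :
    u ^ 2 / (2 * s) ≤ v ^ 2 / (2 * t) + ((2 * R + 2 * a) / (2 * a) + R ^ 2 / (2 * a ^ 2)) * d := by
  have hs0 : 0 < s := ha.trans_le hs
  have ht0 : 0 < t := ha.trans_le ht
  have hR : 0 ≤ R := hv.trans hvR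
  have h1 : u ^ 2 ≤ v ^ 2 + (2 * R + 2 * a) * d := by
    have : u ^ 2 ≤ (v + d) ^ 2 := by gcongr
    nlinarith [mul_le_mul_of_nonneg_right hvR hd, mul_le_mul_of_nonneg_right hda hd]
  have h2 : u ^ 2 / (2 * s) ≤ v ^ 2 / (2 * s) + (2 * R + 2 * a) * d / (2 * a) := by
    calc u ^ 2 / (2 * s) ≤ (v ^ 2 + (2 * R + 2 * a) * d) / (2 * s) := by gcongr
      _ = v ^ 2 / (2 * s) + (2 * R + 2 * a) * d / (2 * s) := add_div _ _ _
      _ ≤ _ := by gcongr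
  have h3 : v ^ 2 / (2 * s) - v ^ 2 / (2 * t) ≤ R ^ 2 * d / (2 * a ^ 2) := by
    calc v ^ 2 / (2 * s) - v ^ 2 / (2 * t) = v ^ 2 * (t - s) / (2 * (s * t)) := by
          field_simp
      _ ≤ v ^ 2 * d / (2 * (s * t)) := by gcongr
      _ ≤ R ^ 2 * d / (2 * (a * a)) := by gcongr
      _ = _ := by rw [sq a]
  have h4 : ((2 * R + 2 * a) / (2 * a) + R ^ 2 / (2 * a ^ 2)) * d
      = (2 * R + 2 * a) * d / (2 * a) + R ^ 2 * d / (2 * a ^ 2) := by ring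
  linarith

/-- For a bounded function `f`, the map `(t, x) ↦ HJ_t f (x)` is locally Lipschitz on
`(0, ∞) × E` (with the product metric). -/
theorem hjShift_locallyLipschitz {E : Type*} [NormedAddCommGroup E] [InnerProductSpace ℝ E]
    (f : E → ℝ) (hf : ∃ C : ℝ, ∀ x, |f x| ≤ C) :
    LocallyLipschitzOn {p : ℝ × E | 0 < p.1}
      (fun p : ℝ × E => hjShift p.1 f p.2) := by
  obtain ⟨C, hC⟩ := hf
  have hC0 : 0 ≤ C := (abs_nonneg _).trans (hC 0)
  rintro ⟨t₀, x₀⟩ (ht₀ : 0 < t₀)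
  obtain ⟨a, ha, rfl⟩ : ∃ a : ℝ, 0 < a ∧ t₀ = 2 * a := ⟨t₀ / 2, by positivity, by ring⟩
  -- Times in the ball of radius `a` are at most `3a`, so this `R` satisfies `R² ≥ 4Ct`.
  set R : ℝ := 12 * C * a + 1 with hR
  have hR1 : 1 ≤ R := by rw [hR]; nlinarith [mul_nonneg hC0 ha.le]
  set K : ℝ := (2 * R + 2 * a) / (2 * a) + R ^ 2 / (2 * a ^ 2) with hK
  have hK0 : 0 ≤ K := by positivity
  refine ⟨⟨K, hK0⟩, Metric.ball (2 * a, x₀) a,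
    mem_nhdsWithin_of_mem_nhds (Metric.ball_mem_nhds _ ha), ?_⟩
  refine LipschitzOnWith.of_le_add_mul _ ?_
  rintro ⟨s, x⟩ hp ⟨t, z⟩ hq
  have hd2 : dist (s, x) (t, z) ≤ 2 * a := by
    have := dist_triangle_right (s, x) (t, z) (2 * a, x₀)
    rw [Metric.mem_ball] at hp hq
    linarith
  have hst : |s - t| ≤ dist (s, x) (t, z) := le_max_left _ _
  have hxz : dist x z ≤ dist (s, x) (t, z) := le_max_right _ _
  have hs' : |s - 2 * a| < a := (le_max_left _ _).trans_lt hp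
  have ht' : |t - 2 * a| < a := (le_max_left _ _).trans_lt hq
  rw [abs_lt] at hs' ht'
  rw [abs_le] at hst
  have hd0 : 0 ≤ dist (s, x) (t, z) := dist_nonneg
  generalize dist (s, x) (t, z) = d at *
  change hjShift s f x ≤ hjShift t f z + K * d
  have hs0 : 0 < s := by linarith
  have ht0 : 0 < t := by linarith
  rw [← sub_le_iff_le_add]
  refine le_ciInf fun y => ?_
  rw [sub_le_iff_le_add]
  rcases le_total ‖z - y‖ R with hy | hy
  · have htri : ‖x - y‖ ≤ ‖z - y‖ + d := by
      have := dist_triangle x z y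
      rw [dist_eq_norm x y, dist_eq_norm z y] at this
      linarith
    have h1 := hjShift_le hC hs0 x y
    have h2 := quad_le_add_mul ha (by linarith) (by linarith) (norm_nonneg (x - y))
      (norm_nonneg (z - y)) hy hd0 hd2 htri (by linarith) (s := s) (t := t)
    linarith
  · -- A far competitor costs at least `C`, hence is beaten by `y = x`.
    have h1 : hjShift s f x ≤ C := by
      have := hjShift_le hC hs0 x x
      simp only [sub_self, norm_zero, ne_eq, OfNat.ofNat_ne_zero, not_false_eq_true, zero_pow,
        zero_div, add_zero] at this
      exact this.trans (abs_le.1 (hC x)).2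
    have h2 : 2 * C ≤ ‖z - y‖ ^ 2 / (2 * t) := by
      rw [le_div_iff₀ (by positivity)]
      have : C * t ≤ C * (3 * a) := by gcongr; linarith
      nlinarith
    have h3 := (abs_le.1 (hC y)).1
    have h4 : 0 ≤ K * d := by positivity
    linarith
end

section
/- Let E be a real inner product space, f : E → ℝ bounded from below, and y ∈ E. Suppose x₀ ∈ E minimizes the function x' ↦ f(x') + ‖y − x'‖²/2 over E. Then for every t ∈ (0, 1], setting γ(t) = x₀ + t·(y − x₀), one has HJ_t f (γ(t)) = f(x₀) + t·‖y − x₀‖²/2, and the infimum defining HJ_t f at the point γ(t) is attained at x₀. -/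
/-- If `x₀` minimizes `x' ↦ f x' + ‖y - x'‖²/2`, then for every `t ∈ (0,1]`, setting
`γ t = x₀ + t • (y - x₀)`, the value `HJ_t f (γ t)` equals `f x₀ + t‖y - x₀‖²/2` and the
infimum defining `HJ_t f` at `γ t` is attained at `x₀`. -/
theorem hjShift_attained_along_segment {E : Type*} [NormedAddCommGroup E]
    [InnerProductSpace ℝ E] (f : E → ℝ) (hf : BddBelow (Set.range f)) (y x₀ : E)
    (hmin : ∀ x' : E, f x₀ + ‖y - x₀‖ ^ 2 / 2 ≤ f x' + ‖y - x'‖ ^ 2 / 2) :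
    ∀ t ∈ Set.Ioc (0 : ℝ) 1,
      hjShift t f (x₀ + t • (y - x₀)) = f x₀ + t * ‖y - x₀‖ ^ 2 / 2 ∧
      ∀ x' : E,
        f x₀ + ‖(x₀ + t • (y - x₀)) - x₀‖ ^ 2 / (2 * t) ≤
          f x' + ‖(x₀ + t • (y - x₀)) - x'‖ ^ 2 / (2 * t) := by
  rintro t ⟨ht0, ht1⟩
  have hval : ‖(x₀ + t • (y - x₀)) - x₀‖ ^ 2 / (2 * t) = t * ‖y - x₀‖ ^ 2 / 2 := by
    rw [add_sub_cancel_left, norm_smul, Real.norm_of_nonneg ht0.le]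
    field_simp
  have hle : ∀ x' : E,
      f x₀ + ‖(x₀ + t • (y - x₀)) - x₀‖ ^ 2 / (2 * t) ≤
        f x' + ‖(x₀ + t • (y - x₀)) - x'‖ ^ 2 / (2 * t) := by
    intro x'
    have h := hmin x'
    have e1 : y - x' = (y - x₀) - (x' - x₀) := by abel
    have e2 : (x₀ + t • (y - x₀)) - x' = t • (y - x₀) - (x' - x₀) := by abel
    rw [e1, norm_sub_sq_real (y - x₀) (x' - x₀)] at h
    rw [hval, e2, norm_sub_sq_real (t • (y - x₀)), norm_smul, Real.norm_of_nonneg ht0.le,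
      real_inner_smul_left]
    have hexp : ((t * ‖y - x₀‖) ^ 2 - 2 * (t * inner ℝ (y - x₀) (x' - x₀)) +
        ‖x' - x₀‖ ^ 2) / (2 * t) =
        t * ‖y - x₀‖ ^ 2 / 2 - inner ℝ (y - x₀) (x' - x₀) + ‖x' - x₀‖ ^ 2 / (2 * t) := by
      field_simp
    have hw : ‖x' - x₀‖ ^ 2 / 2 ≤ ‖x' - x₀‖ ^ 2 / (2 * t) := by
      gcongr
      linarith
    rw [hexp]
    linarith
  refine ⟨?_, hle⟩
  rw [← hval]
  exact (IsLeast.csInf_eq ⟨⟨x₀, rfl⟩, Set.forall_mem_range.2 hle⟩)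
end

section
/- Let H be a real inner product space, I ⊆ ℝ an open interval, λ : I → ℝ continuous, and f : I × H → ℝ a family such that for each t ∈ I the function f_t := f(t, ·) is differentiable and x ↦ f_t(x) − (λ(t)/2)‖x‖² is concave. Let α, β : I → H be differentiable curves with α'(t) = ∇f_t(α(t)) and β'(t) = ∇f_t(β(t)) for all t ∈ I. Then for all t₀ ≤ t₁ in I, ‖α(t₁) − β(t₁)‖ ≤ exp( ∫_{t₀}^{t₁} λ(t) dt ) · ‖α(t₀) − β(t₀)‖. -/
/-!
For a differentiable function `φ` such that `φ - (c/2)‖·‖²` is concave, the gradient satisfies the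
one-sided Lipschitz bound `⟪∇φ x - ∇φ y, x - y⟫ ≤ c ‖x - y‖²`: restricted to the line through `x`
and `y`, the concave function has a nonincreasing derivative. Hence
`d/dt ‖α - β‖² = 2 ⟪α - β, ∇f_t(α) - ∇f_t(β)⟫ ≤ 2 λ(t) ‖α - β‖²`, so that
`exp(-2 ∫_{t₀}^t λ) ‖α t - β t‖²` is nonincreasing (Grönwall with an integrating factor). Comparing
its values at `t₀` and `t₁` and taking square roots gives the estimate.
-/

open scoped RealInnerProductSpace in
/-- The gradient of a differentiable `c`-concave function is one-sided Lipschitz with constant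
`c`. -/
lemma inner_gradient_sub_le {H : Type*} [NormedAddCommGroup H]
    [InnerProductSpace ℝ H] [CompleteSpace H] (φ : H → ℝ) (c : ℝ)
    (hd : Differentiable ℝ φ)
    (hc : ConcaveOn ℝ Set.univ (fun x => φ x - c / 2 * ‖x‖ ^ 2)) (x y : H) :
    ⟪x - y, gradient φ x - gradient φ y⟫ ≤ c * ‖x - y‖ ^ 2 := by
  have hline : ∀ s : ℝ, HasDerivAt (fun s : ℝ => AffineMap.lineMap (k := ℝ) y x s) (x - y) s :=
    fun s => AffineMap.hasDerivAt_lineMap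
  have hg : ∀ s : ℝ, HasDerivAt (fun s : ℝ => φ (AffineMap.lineMap y x s)
      - c / 2 * ‖AffineMap.lineMap (k := ℝ) y x s‖ ^ 2)
      (⟪gradient φ (AffineMap.lineMap y x s), x - y⟫
        - c / 2 * (2 * ⟪AffineMap.lineMap (k := ℝ) y x s, x - y⟫)) s := by
    intro s
    have h1 := ((hd (AffineMap.lineMap y x s)).hasGradientAt.hasFDerivAt).comp_hasDerivAt s (hline s)
    rw [InnerProductSpace.toDual_apply_apply] at h1
    exact h1.sub ((hline s).norm_sq.const_mul (c / 2))
  have hconc : ConcaveOn ℝ Set.univ (fun s : ℝ => φ (AffineMap.lineMap y x s)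
      - c / 2 * ‖AffineMap.lineMap (k := ℝ) y x s‖ ^ 2) := by
    simpa [Function.comp_def] using hc.comp_affineMap (AffineMap.lineMap (k := ℝ) y x)
  have hanti := hconc.antitoneOn_deriv (fun s _ => (hg s).differentiableAt)
    (Set.mem_univ (0 : ℝ)) (Set.mem_univ (1 : ℝ)) zero_le_one
  rw [(hg 0).deriv, (hg 1).deriv] at hanti
  simp only [AffineMap.lineMap_apply_zero, AffineMap.lineMap_apply_one] at hanti
  have hn : ⟪x, x - y⟫ - ⟪y, x - y⟫ = ‖x - y‖ ^ 2 := by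
    rw [← inner_sub_left, real_inner_self_eq_norm_sq]
  rw [real_inner_comm, inner_sub_left, ← hn]
  linarith


/-- Gradient-flow contraction estimate for a `λ(t)`-concave family on a real inner product
space: if `α` and `β` are gradient curves of the family `f t` on an open interval `I`, then
`‖α t₁ - β t₁‖ ≤ exp(∫_{t₀}^{t₁} λ) ‖α t₀ - β t₀‖` for `t₀ ≤ t₁` in `I`. -/
theorem gradient_flow_contraction {H : Type*} [NormedAddCommGroup H]
    [InnerProductSpace ℝ H] [CompleteSpace H]
    (I : Set ℝ) (hIopen : IsOpen I) (hIconn : I.OrdConnected)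
    (lam : ℝ → ℝ) (hlam : ContinuousOn lam I)
    (f : ℝ → H → ℝ)
    (hdiff : ∀ t ∈ I, Differentiable ℝ (f t))
    (hconc : ∀ t ∈ I, ConcaveOn ℝ Set.univ (fun x => f t x - lam t / 2 * ‖x‖ ^ 2))
    (α β : ℝ → H)
    (hα : ∀ t ∈ I, HasDerivAt α (gradient (f t) (α t)) t)
    (hβ : ∀ t ∈ I, HasDerivAt β (gradient (f t) (β t)) t)
    {t₀ t₁ : ℝ} (ht₀ : t₀ ∈ I) (ht₁ : t₁ ∈ I) (h01 : t₀ ≤ t₁) :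
    ‖α t₁ - β t₁‖ ≤ Real.exp (∫ t in t₀..t₁, lam t) * ‖α t₀ - β t₀‖ := by
  have hsub : Set.Icc t₀ t₁ ⊆ I := hIconn.out ht₀ ht₁
  have hΛ : ∀ t ∈ I, HasDerivAt (fun t => ∫ s in t₀..t, lam s) (lam t) t := by
    intro t ht
    refine intervalIntegral.integral_hasDerivAt_right ?_ ?_ (hlam.continuousAt (hIopen.mem_nhds ht))
    · exact (hlam.mono (hIconn.uIcc_subset ht₀ ht)).intervalIntegrable
    · exact hlam.stronglyMeasurableAtFilter hIopen t ht
  -- `exp(-2 ∫ λ)` is the integrating factor for `d/dt ‖α - β‖² ≤ 2 λ ‖α - β‖²`.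
  have hu : ∀ t ∈ I, HasDerivAt
      (fun t => Real.exp (-2 * ∫ s in t₀..t, lam s) * ‖α t - β t‖ ^ 2)
      (Real.exp (-2 * ∫ s in t₀..t, lam s) * (-2 * lam t) * ‖α t - β t‖ ^ 2
        + Real.exp (-2 * ∫ s in t₀..t, lam s)
          * (2 * inner ℝ (α t - β t) (gradient (f t) (α t) - gradient (f t) (β t)))) t := by
    intro t ht
    exact ((hΛ t ht).const_mul (-2)).exp.mul ((hα t ht).sub (hβ t ht)).norm_sq
  have hanti : AntitoneOn (fun t => Real.exp (-2 * ∫ s in t₀..t, lam s) * ‖α t - β t‖ ^ 2)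
      (Set.Icc t₀ t₁) := by
    refine antitoneOn_of_deriv_nonpos (convex_Icc _ _)
      (fun t ht => (hu t (hsub ht)).continuousAt.continuousWithinAt)
      (fun t ht => (hu t (hsub (interior_subset ht))).differentiableAt.differentiableWithinAt) ?_
    intro t ht
    have htI := hsub (interior_subset ht)
    rw [(hu t htI).deriv]
    have hk := inner_gradient_sub_le (f t) (lam t) (hdiff t htI) (hconc t htI) (α t) (β t)
    have hm := mul_le_mul_of_nonneg_left hk (Real.exp_pos (-2 * ∫ s in t₀..t, lam s)).le
    linarith
  have h := hanti (Set.left_mem_Icc.2 h01) (Set.right_mem_Icc.2 h01) h01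
  simp only [intervalIntegral.integral_same, mul_zero, Real.exp_zero, one_mul] at h
  refine (sq_le_sq₀ (norm_nonneg _) (by positivity)).1 ?_
  set L := ∫ s in t₀..t₁, lam s
  have hE : Real.exp L ^ 2 * Real.exp (-2 * L) = 1 := by
    rw [← Real.exp_nat_mul, ← Real.exp_add]
    simp
  calc ‖α t₁ - β t₁‖ ^ 2
      = Real.exp L ^ 2 * (Real.exp (-2 * L) * ‖α t₁ - β t₁‖ ^ 2) := by
        rw [← mul_assoc, hE, one_mul]
    _ ≤ Real.exp L ^ 2 * ‖α t₀ - β t₀‖ ^ 2 := by gcongr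
    _ = (Real.exp L * ‖α t₀ - β t₀‖) ^ 2 := by ring
end

section
/- Let H be a real inner product space, f : H → ℝ bounded from below, and for t > 0 set f_t = HJ_t f; assume each f_t is differentiable on H. Let α, β : (0, 1) → H be differentiable curves with α'(t) = ∇f_t(α(t)) and β'(t) = ∇f_t(β(t)) for all t ∈ (0,1). Then for all 0 < t₀ ≤ t₁ < 1, ‖α(t₁) − β(t₁)‖ ≤ (t₁/t₀) · ‖α(t₀) − β(t₀)‖. -/
open scoped RealInnerProductSpace in
theorem concaveOn_hjShift_sub {E : Type*} [NormedAddCommGroup E] [InnerProductSpace ℝ E]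
    {f : E → ℝ} (hf : BddBelow (Set.range f)) {t : ℝ} (ht : 0 < t) :
    ConcaveOn ℝ Set.univ (fun x => hjShift t f x - ‖x‖ ^ 2 / (2 * t)) := by
  obtain ⟨m, hm⟩ := hf
  -- The infimum defining `hjShift` is over a family bounded below, so it is not a junk value.
  have hle : ∀ x y : E, hjShift t f x ≤ f y + ‖x - y‖ ^ 2 / (2 * t) := by
    intro x y
    refine ciInf_le (f := fun y => f y + ‖x - y‖ ^ 2 / (2 * t)) ⟨m, ?_⟩ y
    rintro _ ⟨z, rfl⟩
    have h1 : m ≤ f z := hm ⟨z, rfl⟩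
    have h2 : 0 ≤ ‖x - z‖ ^ 2 / (2 * t) := by positivity
    simp only
    linarith
  have hexp : ∀ x y : E, ‖x - y‖ ^ 2 / (2 * t) =
      ‖x‖ ^ 2 / (2 * t) - ⟪x, y⟫ / t + ‖y‖ ^ 2 / (2 * t) := by
    intro x y
    rw [norm_sub_sq_real]
    field_simp
  refine ⟨convex_univ, fun x _ y _ a b ha hb hab => ?_⟩
  rw [le_sub_iff_add_le]
  refine le_ciInf fun z => ?_
  have hx := mul_le_mul_of_nonneg_left (hle x z) ha
  have hy := mul_le_mul_of_nonneg_left (hle y z) hb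
  rw [hexp] at hx hy
  rw [hexp, inner_add_left, real_inner_smul_left, real_inner_smul_left]
  obtain rfl : b = 1 - a := by linarith
  simp only [smul_eq_mul]
  have e : (a * ⟪x, z⟫ + (1 - a) * ⟪y, z⟫) / t = a * (⟪x, z⟫ / t) + (1 - a) * (⟪y, z⟫ / t) := by
    ring
  rw [e]
  linarith

open scoped RealInnerProductSpace in
/-- One-sided Lipschitz bound for `∇f_t`: concavity along the segment from `y` to `x` compares the
derivatives at its two endpoints. -/
theorem inner_gradient_hjShift_sub_le {E : Type*} [NormedAddCommGroup E] [InnerProductSpace ℝ E]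
    [CompleteSpace E] {f : E → ℝ} (hf : BddBelow (Set.range f)) {t : ℝ} (ht : 0 < t)
    (hd : Differentiable ℝ (hjShift t f)) (x y : E) :
    ⟪gradient (hjShift t f) x - gradient (hjShift t f) y, x - y⟫ ≤ ‖x - y‖ ^ 2 / t := by
  have hc := (concaveOn_hjShift_sub hf ht).comp_affineMap (AffineMap.lineMap y x : ℝ →ᵃ[ℝ] E)
  rw [Set.preimage_univ] at hc
  have hder : ∀ s : ℝ, HasDerivAt
      ((fun x => hjShift t f x - ‖x‖ ^ 2 / (2 * t)) ∘ (AffineMap.lineMap y x : ℝ →ᵃ[ℝ] E))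
      (⟪gradient (hjShift t f) (AffineMap.lineMap y x s), x - y⟫
        - 2 * ⟪(AffineMap.lineMap y x s : E), x - y⟫ / (2 * t)) s := by
    intro s
    have hl : HasDerivAt (fun s : ℝ => (AffineMap.lineMap y x s : E)) (x - y) s :=
      AffineMap.hasDerivAt_lineMap
    have h1 := (hd (AffineMap.lineMap y x s)).hasGradientAt.hasFDerivAt.comp_hasDerivAt s hl
    have h2 := hl.norm_sq.div_const (2 * t)
    rw [InnerProductSpace.toDual_apply_apply] at h1
    exact h1.sub h2
  have h0 := hc.slope_le_of_hasDerivAt (Set.mem_univ 0) (Set.mem_univ 1) zero_lt_one (hder 0)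
  have h1 := hc.le_slope_of_hasDerivAt (Set.mem_univ 0) (Set.mem_univ 1) zero_lt_one (hder 1)
  have h := h1.trans h0
  rw [AffineMap.lineMap_apply_zero, AffineMap.lineMap_apply_one, mul_div_mul_left _ _ two_ne_zero,
    mul_div_mul_left _ _ two_ne_zero] at h
  have e : ‖x - y‖ ^ 2 / t = ⟪x, x - y⟫ / t - ⟪y, x - y⟫ / t := by
    rw [← real_inner_self_eq_norm_sq, inner_sub_left, sub_div]
  rw [inner_sub_left, e]
  linarith

/-- Contraction estimate for gradient curves of the Hamilton–Jacobi shifted family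
`f_t = HJ_t f`: if `α, β : (0,1) → H` are gradient curves of `f_t`, then
`‖α t₁ - β t₁‖ ≤ (t₁/t₀) ‖α t₀ - β t₀‖` for `0 < t₀ ≤ t₁ < 1`. -/
theorem hjShift_gradient_flow_contraction {H : Type*} [NormedAddCommGroup H]
    [InnerProductSpace ℝ H] [CompleteSpace H]
    (f : H → ℝ) (hf : BddBelow (Set.range f))
    (hdiff : ∀ t : ℝ, 0 < t → Differentiable ℝ (hjShift t f))
    (α β : ℝ → H)
    (hα : ∀ t ∈ Set.Ioo (0 : ℝ) 1, HasDerivAt α (gradient (hjShift t f) (α t)) t)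
    (hβ : ∀ t ∈ Set.Ioo (0 : ℝ) 1, HasDerivAt β (gradient (hjShift t f) (β t)) t)
    {t₀ t₁ : ℝ} (h0 : 0 < t₀) (h01 : t₀ ≤ t₁) (h1 : t₁ < 1) :
    ‖α t₁ - β t₁‖ ≤ (t₁ / t₀) * ‖α t₀ - β t₀‖ := by
  have hder : ∀ t ∈ Set.Ioo (0 : ℝ) 1, HasDerivAt (fun s => ‖α s - β s‖ ^ 2 / s ^ 2)
      ((2 * inner ℝ (α t - β t)
          (gradient (hjShift t f) (α t) - gradient (hjShift t f) (β t)) * t ^ 2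
        - ‖α t - β t‖ ^ 2 * (2 * t)) / (t ^ 2) ^ 2) t := by
    intro t ht
    have h2 : HasDerivAt (fun s : ℝ => s ^ 2) (2 * t) t := by simpa using hasDerivAt_pow 2 t
    exact ((hα t ht).sub (hβ t ht)).norm_sq.div h2 (pow_ne_zero 2 ht.1.ne')
  have hanti : AntitoneOn (fun s => ‖α s - β s‖ ^ 2 / s ^ 2) (Set.Ioo (0 : ℝ) 1) := by
    refine antitoneOn_of_deriv_nonpos (convex_Ioo 0 1)
      (fun t ht => (hder t ht).continuousAt.continuousWithinAt) ?_ ?_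
    · rw [interior_Ioo]
      exact fun t ht => (hder t ht).differentiableAt.differentiableWithinAt
    · rw [interior_Ioo]
      intro t ht
      rw [(hder t ht).deriv]
      have hle := inner_gradient_hjShift_sub_le hf ht.1 (hdiff t ht.1) (α t) (β t)
      rw [real_inner_comm, le_div_iff₀ ht.1] at hle
      refine div_nonpos_of_nonpos_of_nonneg ?_ (by positivity)
      nlinarith [mul_le_mul_of_nonneg_right hle ht.1.le]
  have hpos : 0 < t₁ := h0.trans_le h01
  have h := hanti ⟨h0, h01.trans_lt h1⟩ ⟨hpos, h1⟩ h01
  simp only [← div_pow] at h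
  have h' := le_of_sq_le_sq h (by positivity)
  rw [div_le_iff₀ hpos] at h'
  calc ‖α t₁ - β t₁‖ ≤ ‖α t₀ - β t₀‖ / t₀ * t₁ := h'
    _ = t₁ / t₀ * ‖α t₀ - β t₀‖ := by ring
end

section
/- Let m be a positive integer, λ ∈ ℝ, and let f : ℝ^m → ℝ be a Lipschitz function such that x ↦ f(x) − (λ/2)‖x‖² is concave. Then for every nonnegative smooth compactly supported function u : ℝ^m → ℝ one has ∫ f·Δu dvol ≤ m·λ·∫ u dvol, where Δu is the Laplacian of u and vol is Lebesgue measure. (I.e., the distributional Laplacian of f is at most m·λ·vol.) -/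
/-!
The Laplacian is a sum of pure second derivatives, so it suffices to show
`∫ f ∂ᵥ∂ᵥu ≤ λ ‖v‖² ∫ u` for each vector `v`. Both derivatives are written as limits of one-sided
difference quotients and moved onto `f` by translation invariance of Lebesgue measure
(`tendsto_integral_sub_mul`), which needs only continuity of `f`. For steps `s, t > 0`
the resulting mixed difference
`f (x - tv - sv) - f (x - sv) - f (x - tv) + f x` is at most `λ s t ‖v‖²`
(`mixed_difference_le`): the points `x - sv` and `x - tv` lie between `x` and `x - (s + t)v`
and have the same midpoint, so the concave part of `f` contributes a nonpositive amount and the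
quadratic part contributes exactly `λ s t ‖v‖²`. Multiplying by `u ≥ 0`, dividing by `s t`,
and letting `s → 0`, then `t → 0`, gives the claim.
-/

open MeasureTheory

/-- The Laplacian of `u` at `x`: the sum of the pure second partial derivatives, i.e. the
trace of the Hessian of `u` at `x`. -/
noncomputable def lap {m : ℕ} (u : EuclideanSpace ℝ (Fin m) → ℝ)
    (x : EuclideanSpace ℝ (Fin m)) : ℝ :=
  ∑ i : Fin m, iteratedFDeriv ℝ 2 u x ![EuclideanSpace.single i 1, EuclideanSpace.single i 1]

open Filter Topology

section
variable {E : Type*} [NormedAddCommGroup E] [InnerProductSpace ℝ E]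

lemma mixed_difference_le {lam : ℝ} {f : E → ℝ}
    (hconc : ConcaveOn ℝ Set.univ (fun x => f x - lam / 2 * ‖x‖ ^ 2))
    (x v : E) {s t : ℝ} (hs : 0 < s) (ht : 0 < t) :
    f (x - s • v - t • v) - f (x - s • v) - (f (x - t • v) - f x) ≤ lam * s * t * ‖v‖ ^ 2 := by
  have hst : s + t ≠ 0 := by positivity
  have hsum : s / (s + t) + t / (s + t) = 1 := by field_simp
  have h1 := hconc.2 (Set.mem_univ x) (Set.mem_univ (x - s • v - t • v))
    (show 0 ≤ s / (s + t) by positivity) (show 0 ≤ t / (s + t) by positivity) hsum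
  have h2 := hconc.2 (Set.mem_univ x) (Set.mem_univ (x - s • v - t • v))
    (show 0 ≤ t / (s + t) by positivity) (show 0 ≤ s / (s + t) by positivity) (by linarith)
  have e1 : (s / (s + t)) • x + (t / (s + t)) • (x - s • v - t • v) = x - t • v := by
    match_scalars <;> (field_simp; try ring)
  have e2 : (t / (s + t)) • x + (s / (s + t)) • (x - s • v - t • v) = x - s • v := by
    match_scalars <;> (field_simp; ring)
  have e3 : x - s • v - t • v = x - (s + t) • v := by module
  have hn : ∀ r : ℝ, ‖x - r • v‖ ^ 2 = ‖x‖ ^ 2 - 2 * r * inner ℝ x v + r ^ 2 * ‖v‖ ^ 2 := by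
    intro r
    rw [norm_sub_sq_real, inner_smul_right, norm_smul, mul_pow, Real.norm_eq_abs, sq_abs]
    ring
  rw [e1] at h1
  rw [e2] at h2
  rw [e3] at h1 h2 ⊢
  simp only [smul_eq_mul, hn] at h1 h2
  have hs' : s / (s + t) = 1 - t / (s + t) := by linarith
  rw [hs'] at h1 h2
  linarith

variable [FiniteDimensional ℝ E] [MeasurableSpace E] [BorelSpace E]

/-- Integration by parts with the derivative of `h` replaced by a difference quotient, so that
`h` need only be continuous. -/
lemma tendsto_integral_sub_mul {w h : E → ℝ} (hw : ContDiff ℝ 1 w) (hws : HasCompactSupport w)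
    (hh : Continuous h) (v : E) (μ : Measure E) [μ.IsAddHaarMeasure] :
    Tendsto (fun t : ℝ => t⁻¹ * ∫ x, w x * (h (x - t • v) - h x) ∂μ) (𝓝[>] 0)
      (𝓝 (∫ x, fderiv ℝ w x v * h x ∂μ)) := by
  obtain ⟨C, hC⟩ := hw.lipschitzWith_of_hasCompactSupport hws one_ne_zero
  have key := hC.integral_inv_smul_sub_mul_tendsto_integral_lineDeriv_mul' (μ := μ) hws hh v
  simp_rw [((hw.differentiable one_ne_zero) _).lineDeriv_eq_fderiv] at key
  refine key.congr fun t => ?_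
  have hwc := hw.continuous
  have i0 : Integrable (fun x => w x * h x) μ :=
    (hwc.mul hh).integrable_of_hasCompactSupport hws.mul_right
  have i1 : Integrable (fun x => w x * h (x - t • v)) μ :=
    (hwc.mul (by fun_prop)).integrable_of_hasCompactSupport hws.mul_right
  have i2 : Integrable (fun x => w (x + t • v) * h x) μ := by
    simpa using i1.comp_add_right (t • v)
  have e : ∫ x, w (x + t • v) * h x ∂μ = ∫ x, w x * h (x - t • v) ∂μ := by
    simpa using integral_add_right_eq_self (μ := μ) (fun x => w x * h (x - t • v)) (t • v)
  simp_rw [smul_eq_mul, mul_assoc]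
  rw [integral_const_mul]
  simp_rw [sub_mul, mul_sub]
  rw [integral_sub i2 i0, integral_sub i1 i0, e]

/-- Semiconcavity in the distributional sense, in a single direction `v`. -/
lemma integral_second_derivative_le {lam : ℝ} {f u : E → ℝ} (hf : Continuous f)
    (hconc : ConcaveOn ℝ Set.univ (fun x => f x - lam / 2 * ‖x‖ ^ 2))
    (hu : ContDiff ℝ 2 u) (hsupp : HasCompactSupport u) (hu0 : ∀ x, 0 ≤ u x) (v : E)
    (μ : Measure E) [μ.IsAddHaarMeasure] :
    ∫ x, fderiv ℝ (fun y => fderiv ℝ u y v) x v * f x ∂μ ≤ lam * ‖v‖ ^ 2 * ∫ x, u x ∂μ := by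
  have hu' : ContDiff ℝ 1 (fun y => fderiv ℝ u y v) :=
    (hu.fderiv_right (m := 1) (by norm_num)).clm_apply contDiff_const
  refine le_of_tendsto (tendsto_integral_sub_mul hu' (hsupp.fderiv_apply ℝ v) hf v μ) ?_
  filter_upwards [self_mem_nhdsWithin] with t (ht : 0 < t)
  rw [inv_mul_le_iff₀ ht]
  refine le_of_tendsto (tendsto_integral_sub_mul (h := fun x => f (x - t • v) - f x)
    (hu.of_le (by norm_num)) hsupp (by fun_prop) v μ) ?_
  filter_upwards [self_mem_nhdsWithin] with s (hs : 0 < s)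
  rw [inv_mul_le_iff₀ hs]
  have huc := hu.continuous
  calc ∫ x, u x * (f (x - s • v - t • v) - f (x - s • v) - (f (x - t • v) - f x)) ∂μ
      ≤ ∫ x, u x * (lam * s * t * ‖v‖ ^ 2) ∂μ := by
        refine integral_mono ?_ ?_ fun x =>
          mul_le_mul_of_nonneg_left (mixed_difference_le hconc x v hs ht) (hu0 x)
        · exact (huc.mul (by fun_prop)).integrable_of_hasCompactSupport hsupp.mul_right
        · exact (huc.integrable_of_hasCompactSupport hsupp).mul_const _
    _ = s * (t * (lam * ‖v‖ ^ 2 * ∫ x, u x ∂μ)) := by rw [integral_mul_const]; ring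

end

/-- Euclidean case of Claim 1.1: if `f : ℝ^m → ℝ` is Lipschitz and `λ`-concave, then its
distributional Laplacian is at most `m·λ·vol`; i.e. `∫ f·Δu ≤ m·λ·∫ u` for every
nonnegative smooth compactly supported `u`. -/
theorem laplacian_le_of_semiconcave (m : ℕ) (hm : 0 < m) (lam : ℝ)
    (f : EuclideanSpace ℝ (Fin m) → ℝ) (hf : ∃ K : NNReal, LipschitzWith K f)
    (hconc : ConcaveOn ℝ Set.univ (fun x => f x - lam / 2 * ‖x‖ ^ 2))
    (u : EuclideanSpace ℝ (Fin m) → ℝ) (hu : ContDiff ℝ (⊤ : ℕ∞) u)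
    (hsupp : HasCompactSupport u) (hu0 : ∀ x, 0 ≤ u x) :
    ∫ x, f x * lap u x ∂volume ≤ (m : ℝ) * lam * ∫ x, u x ∂volume := by
  obtain ⟨K, hK⟩ := hf
  have hfc := hK.continuous
  have hu2 : ContDiff ℝ 2 u := hu.of_le (WithTop.coe_le_coe.2 (le_top : (2 : ℕ∞) ≤ ⊤))
  have hd : ContDiff ℝ 1 (fderiv ℝ u) := hu2.fderiv_right (by norm_num)
  have hlap : ∀ x, f x * lap u x = ∑ i : Fin m,
      fderiv ℝ (fun y => fderiv ℝ u y (EuclideanSpace.single i 1)) x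
        (EuclideanSpace.single i 1) * f x := by
    intro x
    rw [lap, mul_comm, Finset.sum_mul]
    refine Finset.sum_congr rfl fun i _ => ?_
    rw [iteratedFDeriv_two_apply,
      fderiv_clm_apply (hd.differentiable one_ne_zero x) (differentiableAt_const _)]
    simp
  simp_rw [hlap]
  rw [integral_finsetSum]
  · calc _ ≤ ∑ i : Fin m, lam * ‖(EuclideanSpace.single i 1 : EuclideanSpace ℝ (Fin m))‖ ^ 2
            * ∫ x, u x :=
          Finset.sum_le_sum fun i _ =>
            integral_second_derivative_le hfc hconc hu2 hsupp hu0 _ volume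
      _ = (m : ℝ) * lam * ∫ x, u x := by simp [mul_assoc]
  · intro i _
    have hdi : ContDiff ℝ 1 fun y => fderiv ℝ u y (EuclideanSpace.single i 1) :=
      hd.clm_apply contDiff_const
    exact (((hdi.continuous_fderiv one_ne_zero).clm_apply continuous_const).mul
      hfc).integrable_of_hasCompactSupport
        ((hsupp.fderiv_apply ℝ _).fderiv_apply ℝ _).mul_right
end

section
/- Let m be a positive integer and V : ℝ^m → ℝ^m a continuously differentiable vector field with bounded derivative. Let Φ : ℝ × ℝ^m → ℝ^m be its flow, i.e. Φ(0, x) = x and ∂_t Φ(t, x) = V(Φ(t, x)) for all t ∈ ℝ and x ∈ ℝ^m, and assume each map Φ(t, ·) is a bijection of ℝ^m. Then for every bounded measurable set E ⊆ ℝ^m and every t ≥ 0, vol(Φ(t,·)(E)) − vol(E) = ∫_0^t ( ∫_{Φ(s,·)(E)} div V dvol ) ds, where div V is the divergence of V and vol is Lebesgue measure. -/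
/-!
The volume `f(t) = vol (Φ t '' E)` is shown to be differentiable with derivative
`∫_{Φ t '' E} div V`; the formula is then the fundamental theorem of calculus.

By the group law `Φ (t + h) = Φ h ∘ Φ t` (`flow_add`), it is enough to expand `vol (Φ h '' F)` to
first order in `h` for the bounded set `F = Φ t '' E`. The smoothness of the flow in the space
variable and the variational equation are not needed for this. Grönwall's inequality makes `Φ h`
Lipschitz, so by Rademacher's theorem it is differentiable almost everywhere and the area formula
gives `vol (Φ h '' F) = ∫_F |det DΦ h|` (`LipschitzWith.measureReal_image`). On the other hand
`y ↦ Φ h y - y - h V y` is locally `o(h)`-Lipschitz, uniformly on compact sets, because it is the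
integral over `[0, h]` of `V ∘ Φ s - V`; hence `DΦ h = 1 + h DV + o(h)` wherever the left side
exists (`flow_fderiv_expansion`). As the derivative of the determinant at the identity is the trace,
`|det DΦ h| = 1 + h div V + o(h)` uniformly on `F` (`flow_jacobian_expansion`), and integrating
over `F` gives the derivative (`hasDerivAt_volume_flow`).

The integrability in time of `s ↦ ∫_{Φ s '' E} div V` is free: it is measurable as a derivative
and bounded by a multiple of the continuous function `f`.
-/

open MeasureTheory

/-- The divergence of a vector field `V : ℝ^m → ℝ^m` at `x`: the trace of its derivative. -/
noncomputable def divVF {m : ℕ} (V : EuclideanSpace ℝ (Fin m) → EuclideanSpace ℝ (Fin m))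
    (x : EuclideanSpace ℝ (Fin m)) : ℝ :=
  ∑ i : Fin m, fderiv ℝ V x (EuclideanSpace.single i 1) i

open Filter Topology NNReal

/-! ### The derivative of the determinant at the identity -/

section Determinant

variable {E : Type*} [NormedAddCommGroup E] [NormedSpace ℝ E] [FiniteDimensional ℝ E]

/-- The trace of a continuous endomorphism of a finite-dimensional space, as a continuous linear
functional. -/
noncomputable def traceCLM (E : Type*) [NormedAddCommGroup E] [NormedSpace ℝ E]
    [FiniteDimensional ℝ E] : (E →L[ℝ] E) →L[ℝ] ℝ :=
  LinearMap.toContinuousLinearMap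
    ((LinearMap.trace ℝ E).comp (ContinuousLinearMap.coeLM ℝ))

lemma traceCLM_apply (A : E →L[ℝ] E) : traceCLM E A = LinearMap.trace ℝ E (A : E →ₗ[ℝ] E) := rfl

lemma differentiable_det : Differentiable ℝ (fun A : E →L[ℝ] E => A.det) := by
  classical
  let b := Module.finBasis ℝ E
  have h : (fun A : E →L[ℝ] E => A.det) =
      fun A : E →L[ℝ] E => (LinearMap.toMatrix b b (A : E →ₗ[ℝ] E)).det := by
    ext A
    rw [LinearMap.det_toMatrix]
  rw [h]
  simp only [Matrix.det_apply]
  have hent : ∀ i j, Differentiable ℝ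
      (fun A : E →L[ℝ] E => LinearMap.toMatrix b b (A : E →ₗ[ℝ] E) i j) := by
    intro i j
    let l : (E →L[ℝ] E) →ₗ[ℝ] ℝ :=
      (Matrix.entryLinearMap ℝ ℝ i j).comp
        ((LinearMap.toMatrix b b).toLinearMap.comp (ContinuousLinearMap.coeLM ℝ))
    exact (LinearMap.toContinuousLinearMap l).differentiable
  fun_prop

/-- The derivative of the determinant at the identity is the trace. -/
lemma hasFDerivAt_det_one :
    HasFDerivAt (fun A : E →L[ℝ] E => A.det) (traceCLM E) 1 := by
  classical
  have hd := (differentiable_det (E := E) 1).hasFDerivAt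
  convert hd using 1
  ext M
  let b := Module.finBasis ℝ E
  -- Both sides are the derivative at `0` of the polynomial `r ↦ det (1 + r M)`.
  have hline : HasDerivAt (fun r : ℝ => (1 : E →L[ℝ] E) + r • M) M 0 := by
    simpa using ((hasDerivAt_id (0 : ℝ)).smul_const M).const_add (1 : E →L[ℝ] E)
  have h1 : HasDerivAt (fun r : ℝ => ((1 : E →L[ℝ] E) + r • M).det)
      (fderiv ℝ (fun A : E →L[ℝ] E => A.det) 1 M) 0 := by
    have hd' : HasFDerivAt (fun A : E →L[ℝ] E => A.det)
        (fderiv ℝ (fun A : E →L[ℝ] E => A.det) 1) ((1 : E →L[ℝ] E) + (0 : ℝ) • M) := by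
      simpa using hd
    exact hd'.comp_hasDerivAt (0 : ℝ) hline
  let N := LinearMap.toMatrix b b (M : E →ₗ[ℝ] E)
  let p : Polynomial ℝ := (1 + (Polynomial.X : Polynomial ℝ) • N.map Polynomial.C).det.divX.divX
  have h2 : HasDerivAt (fun r : ℝ => ((1 : E →L[ℝ] E) + r • M).det) N.trace 0 := by
    have : (fun r : ℝ => ((1 : E →L[ℝ] E) + r • M).det) =
        fun r => 1 + N.trace * r + p.eval r * r ^ 2 := by
      ext r
      rw [← Matrix.det_one_add_smul]
      change LinearMap.det (((1 : E →L[ℝ] E) + r • M : E →L[ℝ] E) : E →ₗ[ℝ] E) = _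
      rw [← LinearMap.det_toMatrix b]
      congr 1
      have : (((1 : E →L[ℝ] E) + r • M : E →L[ℝ] E) : E →ₗ[ℝ] E)
        = LinearMap.id + r • (M : E →ₗ[ℝ] E) := rfl
      rw [this, map_add, map_smul, LinearMap.toMatrix_id]
    rw [this]
    have h3 := (((hasDerivAt_id (0 : ℝ)).const_mul N.trace).const_add 1).add
      ((p.hasDerivAt 0).mul ((hasDerivAt_id (0 : ℝ)).pow 2))
    simpa using! h3
  rw [h1.unique h2, traceCLM_apply, LinearMap.trace_eq_matrix_trace ℝ b]

end Determinant

/-! ### First-order expansion of the flow and of its Jacobian -/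

section Flow

variable {E : Type*} [NormedAddCommGroup E] [NormedSpace ℝ E]
  {V : E → E} {Φ : ℝ → E → E} {C : ℝ≥0}

/-- Grönwall's bound, for both signs of time: the map `Φ t` is `exp (C |t|)`-Lipschitz. -/
lemma flow_dist_le (hV : LipschitzWith C V) (hΦ0 : ∀ x, Φ 0 x = x)
    (hΦ : ∀ t x, HasDerivAt (fun s => Φ s x) (V (Φ t x)) t) (t : ℝ) (x y : E) :
    ‖Φ t x - Φ t y‖ ≤ Real.exp (C * |t|) * ‖x - y‖ := by
  have key : ∀ (W : E → E) (Ψ : ℝ → E → E), LipschitzWith C W → (∀ x, Ψ 0 x = x) →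
      (∀ t x, HasDerivAt (fun s => Ψ s x) (W (Ψ t x)) t) → ∀ t, 0 ≤ t →
      ‖Ψ t x - Ψ t y‖ ≤ Real.exp (C * t) * ‖x - y‖ := by
    intro W Ψ hW h0 h t ht
    have := dist_le_of_trajectories_ODE (v := fun _ => W) (K := C) (f := fun s => Ψ s x)
      (g := fun s => Ψ s y) (a := 0) (b := t) (δ := ‖x - y‖) (fun _ => hW)
      (fun s _ => (h s x).continuousAt.continuousWithinAt) (fun s _ => (h s x).hasDerivWithinAt)
      (fun s _ => (h s y).continuousAt.continuousWithinAt) (fun s _ => (h s y).hasDerivWithinAt)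
      (by simp [h0, dist_eq_norm]) t ⟨ht, le_rfl⟩
    simpa [dist_eq_norm, mul_comm] using this
  rcases le_total 0 t with ht | ht
  · rw [abs_of_nonneg ht]
    exact key V Φ hV hΦ0 hΦ t ht
  · rw [abs_of_nonpos ht]
    have := key (fun x => -V x) (fun s => Φ (-s)) hV.neg (by simpa using hΦ0) (fun s z => by
      simpa [Function.comp_def] using
        HasDerivAt.scomp s (h := fun s : ℝ => -s) (hΦ (-s) z) (hasDerivAt_neg s))
      (-t) (by linarith)
    simpa using this

lemma flow_lipschitz (hV : LipschitzWith C V) (hΦ0 : ∀ x, Φ 0 x = x)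
    (hΦ : ∀ t x, HasDerivAt (fun s => Φ s x) (V (Φ t x)) t) (t : ℝ) :
    LipschitzWith (Real.exp (C * |t|)).toNNReal (Φ t) := by
  refine LipschitzWith.of_dist_le_mul fun x y => ?_
  rw [dist_eq_norm, dist_eq_norm, Real.coe_toNNReal _ (Real.exp_pos _).le]
  exact flow_dist_le hV hΦ0 hΦ t x y

lemma flow_add (hV : LipschitzWith C V) (hΦ0 : ∀ x, Φ 0 x = x)
    (hΦ : ∀ t x, HasDerivAt (fun s => Φ s x) (V (Φ t x)) t) (t h : ℝ) (x : E) :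
    Φ (t + h) x = Φ h (Φ t x) := by
  have := ODE_solution_unique_univ (v := fun _ => V) (s := fun _ => Set.univ) (K := C)
    (f := fun s => Φ (t + s) x) (g := fun s => Φ s (Φ t x)) (t₀ := 0)
    (fun _ => hV.lipschitzOnWith)
    (fun s => ⟨(hΦ (t + s) x).comp_const_add t s, Set.mem_univ _⟩)
    (fun s => ⟨hΦ s (Φ t x), Set.mem_univ _⟩) (by simp [hΦ0])
  exact congrFun this h

lemma flow_continuousAt_zero (hV : LipschitzWith C V) (hΦ0 : ∀ x, Φ 0 x = x)
    (hΦ : ∀ t x, HasDerivAt (fun s => Φ s x) (V (Φ t x)) t) (x : E) :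
    ContinuousAt (fun p : ℝ × E => Φ p.1 p.2) (0, x) := by
  have h : ContinuousOn (fun p : ℝ × E => Φ p.1 p.2) (Set.Icc (-1) 1 ×ˢ Set.univ) := by
    refine continuousOn_prod_of_continuousOn_lipschitzOnWith' _ (Real.exp C).toNNReal ?_ ?_
    · intro s hs
      refine ((flow_lipschitz hV hΦ0 hΦ s).weaken ?_).lipschitzOnWith
      gcongr
      exact mul_le_of_le_one_right C.2 (abs_le.2 hs)
    · exact fun y _ s _ => (hΦ s y).continuousAt.continuousWithinAt
  exact h.continuousAt (prod_mem_nhds (Icc_mem_nhds (by norm_num) (by norm_num)) univ_mem)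

/-- Uniformly on a compact set, at every point where `Φ h` is differentiable, its derivative is
`1 + h V' + o(h)`. The remainder `y ↦ Φ h y - y - h V y` is shown to be `ε |h|`-Lipschitz near
each point of the set; no differentiability of the flow in space is presupposed. -/
lemma flow_fderiv_expansion (hV1 : ContDiff ℝ 1 V) (hV : LipschitzWith C V)
    (hΦ0 : ∀ x, Φ 0 x = x) (hΦ : ∀ t x, HasDerivAt (fun s => Φ s x) (V (Φ t x)) t)
    {K : Set E} (hK : IsCompact K) {ε : ℝ} (hε : 0 < ε) :
    ∃ δ > 0, ∀ h : ℝ, |h| < δ → ∀ x ∈ K, ∀ D : E →L[ℝ] E, HasFDerivAt (Φ h) D x →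
      ‖D - 1 - h • fderiv ℝ V x‖ ≤ ε * |h| := by
  have hVd : Differentiable ℝ V := hV1.differentiable one_ne_zero
  set L := Real.exp C with hL
  have hLpos : 0 < L := Real.exp_pos _
  have hC : (0 : ℝ) ≤ C := C.2
  set ε' := ε / (L + 2) with hε'
  have hε'pos : 0 < ε' := by positivity
  have hε'mul : ε' * (L + 2) = ε := by rw [hε']; field_simp
  obtain ⟨η, hη, hDV⟩ : ∃ η > 0, ∀ x ∈ K, ∀ z, dist z x < η →
      ‖fderiv ℝ V z - fderiv ℝ V x‖ ≤ ε' := by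
    have := hK.uniformContinuousAt_of_continuousAt (fderiv ℝ V)
      (fun x _ => (hV1.continuous_fderiv one_ne_zero).continuousAt)
      (Metric.dist_mem_uniformity hε'pos)
    obtain ⟨η, hη, h⟩ := Metric.mem_uniformity_dist.1 this
    refine ⟨η, hη, fun x hx z hz => ?_⟩
    have h' : dist (fderiv ℝ V x) (fderiv ℝ V z) < ε' := h (by rwa [dist_comm]) hx
    rw [← dist_eq_norm, dist_comm]
    exact h'.le
  obtain ⟨δ₁, hδ₁, hflow⟩ : ∃ δ > 0, ∀ x ∈ K, ∀ (s : ℝ) (z : E), |s| < δ → dist z x < δ →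
      dist (Φ s z) x < η := by
    have := (isCompact_singleton (x := (0 : ℝ))).prod hK |>.uniformContinuousAt_of_continuousAt
      (fun p : ℝ × E => Φ p.1 p.2) (fun p hp => by
        obtain ⟨t, x⟩ := p
        obtain rfl : t = 0 := hp.1
        exact flow_continuousAt_zero hV hΦ0 hΦ x) (Metric.dist_mem_uniformity hη)
    obtain ⟨δ, hδ, h⟩ := Metric.mem_uniformity_dist.1 this
    refine ⟨δ, hδ, fun x hx s z hs hz => ?_⟩
    have h' := h (a := ((0 : ℝ), x)) (b := (s, z))
      (by rw [Prod.dist_eq]; exact max_lt (by simpa using hs) (by rwa [dist_comm])) ⟨rfl, hx⟩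
    rw [dist_comm]
    simpa [hΦ0] using h'
  set δ := min δ₁ (min 1 (ε' / (C * (C * L) + 1))) with hδ
  refine ⟨δ, by positivity, fun h hh x hx D hD => ?_⟩
  have hh1 : |h| < δ₁ := hh.trans_le (min_le_left _ _)
  have hh2 : |h| ≤ 1 := hh.le.trans ((min_le_right _ _).trans (min_le_left _ _))
  have hh3 : C * (C * L) * |h| ≤ ε' := by
    have h4 : |h| ≤ ε' / (C * (C * L) + 1) :=
      hh.le.trans ((min_le_right _ _).trans (min_le_right _ _))
    rw [le_div_iff₀ (by positivity)] at h4
    nlinarith [abs_nonneg h]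
  have hr : HasFDerivAt (fun y => Φ h y - y - h • V y) (D - 1 - h • fderiv ℝ V x) x :=
    (hD.sub (hasFDerivAt_id x)).sub ((hVd x).hasFDerivAt.const_smul h)
  refine hr.le_of_lip' (by positivity) ?_
  filter_upwards [Metric.ball_mem_nhds x (lt_min hδ₁ hη)] with y hy
  have hy1 : dist y x < δ₁ := (Metric.mem_ball.1 hy).trans_le (min_le_left _ _)
  have hy2 : dist y x < η := (Metric.mem_ball.1 hy).trans_le (min_le_right _ _)
  have hLip : ∀ s : ℝ, |s| ≤ |h| → ‖Φ s y - Φ s x‖ ≤ L * ‖y - x‖ := by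
    intro s hs
    refine (flow_dist_le hV hΦ0 hΦ s y x).trans ?_
    gcongr
    rw [hL]
    gcongr
    exact mul_le_of_le_one_right hC (hs.trans hh2)
  have hconv : Convex ℝ (Metric.closedBall (0 : ℝ) |h|) := convex_closedBall _ _
  have hmem : ∀ {s : ℝ}, s ∈ Metric.closedBall (0 : ℝ) |h| ↔ |s| ≤ |h| := by
    intro s; simp
  have hDisp : ∀ s : ℝ, |s| ≤ |h| →
      ‖(Φ s y - Φ s x) - (y - x)‖ ≤ C * (L * ‖y - x‖) * |h| := by
    intro s hs
    have := Convex.norm_image_sub_le_of_norm_hasDerivWithin_le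
      (f := fun s => Φ s y - Φ s x) (f' := fun s => V (Φ s y) - V (Φ s x))
      (s := Metric.closedBall (0 : ℝ) |h|) (x := 0) (y := s) (C := C * (L * ‖y - x‖))
      (fun u _ => ((hΦ u y).sub (hΦ u x)).hasDerivWithinAt)
      (fun u hu => (hV.norm_sub_le _ _).trans (by gcongr; exact hLip u (hmem.1 hu)))
      hconv (by simp) (hmem.2 hs)
    simp only [hΦ0, sub_zero, Real.norm_eq_abs] at this
    exact this.trans (by gcongr)
  -- Near `x`, the field `V` is `ε'`-close to its linearization at `x`.
  have hlin : ∀ a b : E, dist a x < η → dist b x < η →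
      ‖V a - V b - fderiv ℝ V x (a - b)‖ ≤ ε' * ‖a - b‖ := fun a b ha hb =>
    Convex.norm_image_sub_le_of_norm_fderiv_le' (s := Metric.ball x η) (fun z _ => hVd z)
      (fun z hz => hDV x hx z hz) (convex_ball _ _) hb ha
  have hA : ‖fderiv ℝ V x‖ ≤ C := norm_fderiv_le_of_lipschitz ℝ hV
  have hxx : dist x x < δ₁ := by simpa using hδ₁
  have hVdiff : ∀ s : ℝ, |s| ≤ |h| →
      ‖(V (Φ s y) - V (Φ s x)) - (V y - V x)‖ ≤ ε * ‖y - x‖ := by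
    intro s hs
    have e1 := hlin (Φ s y) (Φ s x) (hflow x hx s y (hs.trans_lt hh1) hy1)
      (hflow x hx s x (hs.trans_lt hh1) hxx)
    have e2 := hlin y x hy2 (by simpa using hη)
    have e3 : ‖fderiv ℝ V x ((Φ s y - Φ s x) - (y - x))‖ ≤ ε' * ‖y - x‖ := by
      refine (ContinuousLinearMap.le_opNorm _ _).trans ?_
      calc ‖fderiv ℝ V x‖ * ‖(Φ s y - Φ s x) - (y - x)‖
          ≤ C * (C * (L * ‖y - x‖) * |h|) := by gcongr; exact hDisp s hs
        _ = C * (C * L) * |h| * ‖y - x‖ := by ring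
        _ ≤ ε' * ‖y - x‖ := by gcongr
    have e4 : (V (Φ s y) - V (Φ s x)) - (V y - V x) =
        (V (Φ s y) - V (Φ s x) - fderiv ℝ V x (Φ s y - Φ s x))
          - (V y - V x - fderiv ℝ V x (y - x))
          + fderiv ℝ V x ((Φ s y - Φ s x) - (y - x)) := by
      rw [map_sub (fderiv ℝ V x) (Φ s y - Φ s x) (y - x)]; abel
    rw [e4]
    refine (norm_add_le _ _).trans ?_
    have e6 := norm_sub_le (V (Φ s y) - V (Φ s x) - fderiv ℝ V x (Φ s y - Φ s x))
      (V y - V x - fderiv ℝ V x (y - x))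
    have e5 : ε' * ‖Φ s y - Φ s x‖ ≤ ε' * (L * ‖y - x‖) := by gcongr; exact hLip s hs
    rw [← hε'mul]
    linarith
  have hfin := Convex.norm_image_sub_le_of_norm_hasDerivWithin_le
      (f := fun s => Φ s y - Φ s x - s • (V y - V x))
      (f' := fun s => (V (Φ s y) - V (Φ s x)) - (V y - V x))
      (s := Metric.closedBall (0 : ℝ) |h|) (x := 0) (y := h) (C := ε * ‖y - x‖)
      (fun u _ => by
        have := ((hΦ u y).sub (hΦ u x)).sub ((hasDerivAt_id u).smul_const (V y - V x))
        simpa using! this.hasDerivWithinAt)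
      (fun u hu => hVdiff u (hmem.1 hu)) hconv (by simp) (hmem.2 le_rfl)
  simp only [hΦ0, sub_zero, Real.norm_eq_abs, zero_smul] at hfin
  calc ‖Φ h y - y - h • V y - (Φ h x - x - h • V x)‖
      = ‖Φ h y - Φ h x - h • (V y - V x) - (y - x)‖ := by
        rw [smul_sub]; congr 1; abel
    _ ≤ ε * ‖y - x‖ * |h| := hfin
    _ = ε * |h| * ‖y - x‖ := by ring

/-- Uniformly on a compact set, at every point where `Φ h` is differentiable, its Jacobian is
`1 + h tr V' + o(h)`. -/
lemma flow_jacobian_expansion [FiniteDimensional ℝ E] (hV1 : ContDiff ℝ 1 V)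
    (hV : LipschitzWith C V)
    (hΦ0 : ∀ x, Φ 0 x = x) (hΦ : ∀ t x, HasDerivAt (fun s => Φ s x) (V (Φ t x)) t)
    {K : Set E} (hK : IsCompact K) {ε : ℝ} (hε : 0 < ε) :
    ∃ δ > 0, ∀ h : ℝ, |h| < δ → ∀ x ∈ K, ∀ D : E →L[ℝ] E, HasFDerivAt (Φ h) D x →
      |(|D.det| - 1 - h * traceCLM E (fderiv ℝ V x))| ≤ ε * |h| := by
  have hC : (0 : ℝ) ≤ C := C.2
  set T := ‖traceCLM E‖ with hT
  have hT0 : 0 ≤ T := by rw [hT]; positivity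
  set ε₁ := min 1 (ε / (2 * (T + 1))) with hε₁
  have hε₁pos : 0 < ε₁ := by positivity
  have hε₁le : ε₁ ≤ 1 := min_le_left _ _
  have hTε : T * ε₁ ≤ ε / 2 := by
    have : ε₁ ≤ ε / (2 * (T + 1)) := min_le_right _ _
    rw [le_div_iff₀ (by positivity)] at this
    nlinarith
  have hdet := (hasFDerivAt_iff_isLittleO_nhds_zero.1 (hasFDerivAt_det_one (E := E))).def
    (c := ε / (2 * (C + 1))) (by positivity)
  obtain ⟨ρ, hρ, hdet⟩ := Metric.eventually_nhds_iff.1 hdet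
  obtain ⟨δ₁, hδ₁, hfd⟩ := flow_fderiv_expansion hV1 hV hΦ0 hΦ hK hε₁pos
  refine ⟨min δ₁ (min (ρ / (C + 1)) (1 / (ε + T * C + 1))), by positivity,
    fun h hh x hx D hD => ?_⟩
  have hh1 : |h| < δ₁ := hh.trans_le (min_le_left _ _)
  have hh2 : (C + 1) * |h| < ρ := by
    have := hh.trans_le ((min_le_right _ _).trans (min_le_left _ _))
    rw [lt_div_iff₀ (by positivity)] at this
    linarith
  have hh3 : (ε + T * C) * |h| ≤ 1 := by
    have := hh.le.trans ((min_le_right _ _).trans (min_le_right _ _))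
    rw [le_div_iff₀ (by positivity)] at this
    nlinarith [abs_nonneg h]
  have hA : ‖fderiv ℝ V x‖ ≤ C := norm_fderiv_le_of_lipschitz ℝ hV
  have hR := hfd h hh1 x hx D hD
  set A := fderiv ℝ V x
  have hX : ‖D - 1‖ ≤ (C + 1) * |h| := by
    calc ‖D - 1‖ = ‖(D - 1 - h • A) + h • A‖ := by rw [sub_add_cancel]
      _ ≤ ‖D - 1 - h • A‖ + ‖h • A‖ := norm_add_le _ _
      _ ≤ ε₁ * |h| + |h| * C := by rw [norm_smul, Real.norm_eq_abs]; gcongr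
      _ ≤ 1 * |h| + |h| * C := by gcongr
      _ = (C + 1) * |h| := by ring
  have hdet1 : |D.det - 1 - traceCLM E (D - 1)| ≤ ε / 2 * |h| := by
    have := hdet (y := D - 1) (by rw [dist_zero_right]; exact hX.trans_lt hh2)
    rw [add_sub_cancel] at this
    have h1 : (1 : E →L[ℝ] E).det = 1 := by
      change LinearMap.det (LinearMap.id : E →ₗ[ℝ] E) = 1
      exact LinearMap.det_id
    rw [h1, Real.norm_eq_abs] at this
    refine this.trans ?_
    calc ε / (2 * (C + 1)) * ‖D - 1‖ ≤ ε / (2 * (C + 1)) * ((C + 1) * |h|) := by gcongr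
      _ = ε / 2 * |h| := by field_simp
  have htr : |traceCLM E (D - 1) - h * traceCLM E A| ≤ ε / 2 * |h| := by
    have : traceCLM E (D - 1) - h * traceCLM E A = traceCLM E (D - 1 - h • A) := by
      rw [map_sub _ (D - 1), map_smul, smul_eq_mul]
    rw [this]
    calc |traceCLM E (D - 1 - h • A)| ≤ T * ‖D - 1 - h • A‖ :=
          (traceCLM E).le_opNorm _
      _ ≤ T * (ε₁ * |h|) := by gcongr
      _ = T * ε₁ * |h| := by ring
      _ ≤ ε / 2 * |h| := by gcongr
  have htot : |D.det - 1 - h * traceCLM E A| ≤ ε * |h| := by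
    have := abs_add_le (D.det - 1 - traceCLM E (D - 1)) (traceCLM E (D - 1) - h * traceCLM E A)
    rw [sub_add_sub_cancel] at this
    linarith
  have hpos : 0 ≤ D.det := by
    have h1 : |h * traceCLM E A| ≤ |h| * (T * C) := by
      rw [abs_mul]
      gcongr
      exact ((traceCLM E).le_opNorm _).trans (by gcongr)
    have h2 := neg_abs_le (D.det - 1 - h * traceCLM E A)
    have h3 := neg_abs_le (h * traceCLM E A)
    nlinarith
  rwa [abs_of_nonneg hpos]

end Flow

/-! ### Volume of images under the flow -/

section Volume

variable {E : Type*} [NormedAddCommGroup E] [NormedSpace ℝ E] [FiniteDimensional ℝ E]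
  [MeasurableSpace E] [BorelSpace E] {μ : Measure E} [μ.IsAddHaarMeasure]

lemma LipschitzWith.addHaar_image_eq_zero {f : E → E} {L : ℝ≥0} (hf : LipschitzWith L f)
    {s : Set E} (hs : μ s = 0) : μ (f '' s) = 0 := by
  -- Haar measures and the Hausdorff measure of full dimension have the same null sets.
  have h1 : Measure.hausdorffMeasure (Module.finrank ℝ E) s = 0 :=
    Measure.absolutelyContinuous_isAddHaarMeasure _ μ hs
  have h2 : Measure.hausdorffMeasure (Module.finrank ℝ E) (f '' s) = 0 := by
    have := hf.hausdorffMeasure_image_le (d := Module.finrank ℝ E) (by positivity) s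
    rw [h1, mul_zero] at this
    exact le_antisymm this bot_le
  exact Measure.absolutelyContinuous_isAddHaarMeasure μ
    (Measure.hausdorffMeasure (Module.finrank ℝ E)) h2

/-- Area formula for an injective Lipschitz map. It follows from the formula for differentiable
maps, since by Rademacher's theorem the map is differentiable off a null set, whose image is
null. -/
lemma LipschitzWith.measureReal_image {f : E → E} {L : ℝ≥0} (hf : LipschitzWith L f)
    (hinj : Function.Injective f) {s : Set E} (hs : MeasurableSet s)
    (hb : Bornology.IsBounded s) :
    IntegrableOn (fun x => |(fderiv ℝ f x).det|) s μ ∧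
      μ.real (f '' s) = ∫ x in s, |(fderiv ℝ f x).det| ∂μ := by
  set G := s ∩ {x | DifferentiableAt ℝ f x} with hG
  have hGm : MeasurableSet G := hs.inter (measurableSet_of_differentiableAt ℝ f)
  have hnull : μ (s \ G) = 0 := by
    refine measure_mono_null (fun x hx => ?_) hf.ae_differentiableAt
    exact fun hd => hx.2 ⟨hx.1, hd⟩
  have hGs : G =ᵐ[μ] s :=
    (LE.le.eventuallyLE Set.inter_subset_left).antisymm (ae_le_set.2 hnull)
  have hder : ∀ x ∈ G, HasFDerivWithinAt f (fderiv ℝ f x) G x :=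
    fun x hx => hx.2.hasFDerivAt.hasFDerivWithinAt
  have himg : f '' G =ᵐ[μ] f '' s := by
    refine (LE.le.eventuallyLE (Set.image_mono Set.inter_subset_left)).antisymm
      (ae_le_set.2 ?_)
    rw [← Set.image_sdiff hinj]
    exact hf.addHaar_image_eq_zero hnull
  have hfin : μ (f '' G) < ⊤ :=
    (hf.isBounded_image (hb.subset Set.inter_subset_left)).measure_lt_top
  constructor
  · have := (integrableOn_image_iff_integrableOn_abs_det_fderiv_smul μ hGm hder hinj.injOn
      (fun _ => (1 : ℝ))).1 (integrableOn_const hfin.ne)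
    simp only [smul_eq_mul, mul_one] at this
    exact this.congr_set_ae hGs.symm
  · have := integral_image_eq_integral_abs_det_fderiv_smul μ hGm hder hinj.injOn
      (fun _ => (1 : ℝ))
    simp only [smul_eq_mul, mul_one, setIntegral_const] at this
    rw [setIntegral_congr_set hGs, measureReal_congr himg] at this
    exact this

variable {V : E → E} {Φ : ℝ → E → E} {C : ℝ≥0}

/-- The volume of a transported bounded set is differentiable in time, and its derivative is the
integral of the divergence over the transported set. -/
lemma hasDerivAt_volume_flow (hV1 : ContDiff ℝ 1 V) (hV : LipschitzWith C V)
    (hΦ0 : ∀ x, Φ 0 x = x) (hΦ : ∀ t x, HasDerivAt (fun s => Φ s x) (V (Φ t x)) t)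
    (hinj : ∀ t, Function.Injective (Φ t)) {s : Set E} (hs : MeasurableSet s)
    (hb : Bornology.IsBounded s) (t : ℝ) :
    HasDerivAt (fun r => μ.real (Φ r '' s))
      (∫ x in Φ t '' s, traceCLM E (fderiv ℝ V x) ∂μ) t := by
  have hlip := flow_lipschitz hV hΦ0 hΦ
  set F := Φ t '' s with hF
  have hFm : MeasurableSet F :=
    hs.image_of_continuousOn_injOn (hlip t).continuous.continuousOn (hinj t).injOn
  have hFb : Bornology.IsBounded F := (hlip t).isBounded_image hb
  have himg : ∀ h, Φ (t + h) '' s = Φ h '' F := by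
    intro h
    rw [hF, Set.image_image]
    exact Set.image_congr fun x _ => flow_add hV hΦ0 hΦ t h x
  have hcont : Continuous fun x => traceCLM E (fderiv ℝ V x) :=
    (traceCLM E).continuous.comp (hV1.continuous_fderiv one_ne_zero)
  have hdivint : IntegrableOn (fun x => traceCLM E (fderiv ℝ V x)) F μ :=
    (hcont.continuousOn.integrableOn_compact hFb.isCompact_closure).mono_set subset_closure
  have hconst : IntegrableOn (fun _ => (1 : ℝ)) F μ := integrableOn_const hFb.measure_lt_top.ne
  rw [hasDerivAt_iff_isLittleO_nhds_zero, Asymptotics.isLittleO_iff]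
  intro c hc
  set v := μ.real F with hv
  have hv0 : 0 ≤ v := measureReal_nonneg
  obtain ⟨δ, hδ, hJ⟩ := flow_jacobian_expansion hV1 hV hΦ0 hΦ hFb.isCompact_closure
    (ε := c / (v + 1)) (by positivity)
  filter_upwards [Metric.ball_mem_nhds (0 : ℝ) hδ] with h hh
  have hh' : |h| < δ := by simpa using hh
  obtain ⟨hint, hvol⟩ := (hlip h).measureReal_image (μ := μ) (hinj h) hFm hFb
  have ht0 : Φ t '' s = F := rfl
  have heq : μ.real (Φ (t + h) '' s) - μ.real (Φ t '' s)
      - h • (∫ x in F, traceCLM E (fderiv ℝ V x) ∂μ)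
      = ∫ x in F, (|(fderiv ℝ (Φ h) x).det| - 1 - h * traceCLM E (fderiv ℝ V x)) ∂μ := by
    have hint1 : IntegrableOn (fun x => |(fderiv ℝ (Φ h) x).det| - 1) F μ := hint.sub hconst
    rw [integral_sub hint1 (hdivint.const_mul h), integral_sub hint hconst,
      integral_const_mul, himg h, hvol, ht0, smul_eq_mul]
    simp
  rw [heq]
  have hbound : ∀ᵐ x ∂μ.restrict F,
      ‖|(fderiv ℝ (Φ h) x).det| - 1 - h * traceCLM E (fderiv ℝ V x)‖ ≤ c / (v + 1) * |h| := by
    filter_upwards [ae_restrict_mem hFm, ae_restrict_of_ae (hlip h).ae_differentiableAt]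
      with x hx hd
    exact hJ h hh' x (subset_closure hx) _ hd.hasFDerivAt
  have hfin : IsFiniteMeasure (μ.restrict F) := ⟨by simpa using hFb.measure_lt_top⟩
  refine (norm_integral_le_of_norm_le_const hbound).trans ?_
  rw [measureReal_restrict_apply_univ, ← hv, Real.norm_eq_abs]
  calc c / (v + 1) * |h| * v = c * |h| * (v / (v + 1)) := by ring
    _ ≤ c * |h| * 1 := by
        gcongr
        exact (div_le_one (by positivity)).2 (by linarith)
    _ = c * |h| := mul_one _

end Volume

/-! ### Liouville's formula -/

lemma divVF_eq_trace {m : ℕ} (V : EuclideanSpace ℝ (Fin m) → EuclideanSpace ℝ (Fin m))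
    (x : EuclideanSpace ℝ (Fin m)) : divVF V x = traceCLM _ (fderiv ℝ V x) := by
  rw [traceCLM_apply,
    LinearMap.trace_eq_matrix_trace ℝ (EuclideanSpace.basisFun (Fin m) ℝ).toBasis]
  simp [divVF, Matrix.trace, LinearMap.toMatrix_apply]

/-- Liouville-type formula: if `Φ` is the flow of a `C¹` vector field `V` with bounded
derivative, each time-`t` map being a bijection, then for every bounded measurable set `E`
and `t ≥ 0`, `vol (Φ t '' E) - vol E = ∫_0^t ∫_{Φ s '' E} div V dvol ds`. -/
theorem flow_volume_derivative (m : ℕ) (hm : 0 < m)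
    (V : EuclideanSpace ℝ (Fin m) → EuclideanSpace ℝ (Fin m))
    (hV : ContDiff ℝ 1 V) (hbd : ∃ C : ℝ, ∀ x, ‖fderiv ℝ V x‖ ≤ C)
    (Φ : ℝ → EuclideanSpace ℝ (Fin m) → EuclideanSpace ℝ (Fin m))
    (hΦ0 : ∀ x, Φ 0 x = x)
    (hΦ : ∀ (t : ℝ) (x : EuclideanSpace ℝ (Fin m)),
      HasDerivAt (fun s => Φ s x) (V (Φ t x)) t)
    (hbij : ∀ t : ℝ, Function.Bijective (Φ t)) :
    ∀ E : Set (EuclideanSpace ℝ (Fin m)), MeasurableSet E → Bornology.IsBounded E →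
      ∀ t : ℝ, 0 ≤ t →
        (volume (Φ t '' E)).toReal - (volume E).toReal =
          ∫ s in (0:ℝ)..t, ∫ x in Φ s '' E, divVF V x ∂volume := by
  intro E hE hb t _
  obtain ⟨C₀, hC₀⟩ := hbd
  have hbound : ∀ x, ‖fderiv ℝ V x‖ ≤ C₀.toNNReal := fun x =>
    (hC₀ x).trans (Real.le_coe_toNNReal C₀)
  have hLip : LipschitzWith C₀.toNNReal V :=
    lipschitzWith_of_nnnorm_fderiv_le (hV.differentiable one_ne_zero) hbound
  simp only [divVF_eq_trace]
  set T := traceCLM (EuclideanSpace ℝ (Fin m)) with hT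
  have hder := hasDerivAt_volume_flow (μ := (volume : Measure (EuclideanSpace ℝ (Fin m))))
    hV hLip hΦ0 hΦ (fun t => (hbij t).injective) hE hb
  have hcont : Continuous fun r => volume.real (Φ r '' E) :=
    continuous_iff_continuousAt.2 fun r => (hder r).continuousAt
  -- The integrand is measurable, being a derivative, and is dominated by a continuous function.
  have hint : IntervalIntegrable (fun s => ∫ x in Φ s '' E, T (fderiv ℝ V x)) volume 0 t := by
    have hmeas : Measurable fun s => ∫ x in Φ s '' E, T (fderiv ℝ V x) := by
      have : (fun s => ∫ x in Φ s '' E, T (fderiv ℝ V x)) =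
          deriv fun r => volume.real (Φ r '' E) := funext fun s => (hder s).deriv.symm
      rw [this]
      exact measurable_deriv _
    refine IntervalIntegrable.mono_fun'
      (g := fun s => ‖T‖ * C₀.toNNReal * volume.real (Φ s '' E))
      ((hcont.const_mul _).intervalIntegrable 0 t) hmeas.aestronglyMeasurable ?_
    refine Eventually.of_forall fun s => ?_
    refine norm_setIntegral_le_of_norm_le_const ?_ fun x _ => ?_
    · exact ((flow_lipschitz hLip hΦ0 hΦ s).isBounded_image hb).measure_lt_top
    · exact (T.le_opNorm _).trans (by gcongr; exact hbound x)
  have hftc := intervalIntegral.integral_eq_sub_of_hasDerivAt (fun s _ => hder s) hint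
  rw [hftc]
  have h0 : Φ 0 '' E = E := by
    rw [show Φ 0 = id from funext hΦ0, Set.image_id]
  simp only [measureReal_def, h0]
end

section
/- Let m > 0 be a real number, a > 0, and let h : (0, a) → ℝ be a function such that for all 0 < t₀ < t₁ < a with m + (t₁ − t₀)·h(t₀) > 0 one has h(t₁) ≤ m·h(t₀)/(m + (t₁ − t₀)·h(t₀)). Then at every t ∈ (0, a) at which h is differentiable, h'(t) ≤ −h(t)²/m. -/
/-!
Subtracting `h t` from the comparison between `t` and `s > t` and dividing by `s - t` bounds the
difference quotient `(h s - h t) / (s - t)` by `-(h t)² / (m + (s - t) * h t)`. The denominator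
tends to `m > 0` as `s` decreases to `t`, so the comparison applies for `s` close to `t`, and the
bound passes to the limit, where the difference quotient becomes the derivative.
-/

/-- From the two-point Riccati comparison
`h t₁ ≤ m·h t₀ / (m + (t₁ - t₀)·h t₀)` (whenever the denominator is positive) one deduces
the differential inequality `h' ≤ -h²/m` at every point of differentiability. -/
theorem riccati_diff_ineq_of_two_point (m a : ℝ) (hm : 0 < m) (ha : 0 < a)
    (h : ℝ → ℝ)
    (hcomp : ∀ t₀ t₁ : ℝ, 0 < t₀ → t₀ < t₁ → t₁ < a →
      0 < m + (t₁ - t₀) * h t₀ →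
      h t₁ ≤ m * h t₀ / (m + (t₁ - t₀) * h t₀)) :
    ∀ t ∈ Set.Ioo 0 a, ∀ h' : ℝ, HasDerivAt h h' t → h' ≤ -(h t) ^ 2 / m := by
  intro t ht h' hd
  have hden : Filter.Tendsto (fun s : ℝ => m + (s - t) * h t) (nhdsWithin t (Set.Ioi t))
      (nhds m) := by
    have hc : Continuous (fun s : ℝ => m + (s - t) * h t) := by fun_prop
    have h0 := hc.tendsto t
    simp only [sub_self, zero_mul, add_zero] at h0
    exact h0.mono_left nhdsWithin_le_nhds
  have hslope := (hasDerivWithinAt_iff_tendsto_slope' (show t ∉ Set.Ioi t by simp)).1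
    (hd.hasDerivWithinAt (s := Set.Ioi t))
  refine le_of_tendsto_of_tendsto hslope (tendsto_const_nhds.div hden hm.ne') ?_
  filter_upwards [hden.eventually (lt_mem_nhds hm), Ioo_mem_nhdsGT ht.2] with s hs hts
  have hst : 0 < s - t := sub_pos.2 hts.1
  have key := hcomp t s ht.1 hts.1 hts.2 hs
  rw [slope_def_field, div_le_iff₀ hst]
  have heq : -(h t) ^ 2 / (m + (s - t) * h t) * (s - t)
      = m * h t / (m + (s - t) * h t) - h t := by
    have hne := hs.ne'
    rw [div_mul_eq_mul_div, div_sub' hne]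
    congr 1
    ring
  simp only [Pi.div_apply]
  linarith
end

section
/- Let λ ≥ 0, b ≥ 0, a ∈ ℝ, and let g : ℝ → ℝ be a function such that s ↦ g(s) − (λ/2)·s² is concave and g(s) ≥ g(0) + a·s − (b/2)·s² for all s ∈ ℝ. Then for every ℓ ≥ 0 the right derivative of g at ℓ exists and satisfies g'₊(ℓ) ≥ a − (λ + 2b)·ℓ. -/
/-!
Put `φ s = g s - (λ/2) s²` and `c = λ + b`. Then `φ` is concave, so it has a right derivative `p`
at `ℓ`, and `φ s ≥ φ 0 + a s - (c/2) s²`. A concave function that lies above a parabola touching it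
at `0` stays below the tangent line of that parabola: `φ ℓ ≤ φ 0 + a ℓ`
(`concave_le_tangent_of_parabola_le`). Since `p` dominates every slope of `φ` to the right of `ℓ`,
the slope over `[ℓ, 2ℓ]` gives
`p ≥ (φ (2ℓ) - φ ℓ) / ℓ ≥ (2aℓ - 2cℓ² - aℓ) / ℓ = a - 2cℓ`,
and adding back the derivative `λℓ` of the quadratic term yields `a - (λ + 2b) ℓ`. For `ℓ = 0` the
slopes over `[0, s]` with `s → 0` are used instead.
-/

lemma le_of_forall_pos_le_add_half_mul {x y c : ℝ} (h : ∀ s : ℝ, 0 < s → x ≤ y + c / 2 * s) :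
    x ≤ y := by
  have ht : Filter.Tendsto (fun s : ℝ => y + c / 2 * s) (nhdsWithin 0 (Set.Ioi 0)) (nhds y) := by
    have hc : Continuous (fun s : ℝ => y + c / 2 * s) := by fun_prop
    simpa using (hc.tendsto 0).mono_left nhdsWithin_le_nhds
  exact ge_of_tendsto ht (Filter.eventually_of_mem self_mem_nhdsWithin h)

/-- A concave function above a parabola that touches it at `0` lies below the tangent line of the
parabola there. Compare the slope over `[0, ℓ]` with the slopes over `[-s, 0]` as `s → 0`. -/
lemma concave_le_tangent_of_parabola_le {φ : ℝ → ℝ} {a c ℓ : ℝ} (hφ : ConcaveOn ℝ Set.univ φ)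
    (hlow : ∀ s : ℝ, φ 0 + a * s - c / 2 * s ^ 2 ≤ φ s) (hℓ : 0 < ℓ) :
    φ ℓ ≤ φ 0 + a * ℓ := by
  have hslope : (φ ℓ - φ 0) / ℓ ≤ a := by
    refine le_of_forall_pos_le_add_half_mul (c := c) fun s hs => ?_
    have h := hφ.slope_anti_adjacent (Set.mem_univ (-s)) (Set.mem_univ ℓ)
      (neg_lt_zero.mpr hs) hℓ
    simp only [sub_zero, sub_neg_eq_add, zero_add] at h
    refine h.trans ?_
    rw [div_le_iff₀ hs]
    linarith [hlow (-s)]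
  rw [div_le_iff₀ hℓ] at hslope
  linarith

/-- One-dimensional derivative estimate: if `g : ℝ → ℝ` is `λ`-concave (`λ ≥ 0`) and
`g s ≥ g 0 + a·s - (b/2)s²` for all `s` (with `b ≥ 0`), then for every `ℓ ≥ 0` the right
derivative of `g` at `ℓ` exists and is at least `a - (λ + 2b)·ℓ`. -/
theorem right_deriv_bound_of_semiconcave (lam b a : ℝ) (hlam : 0 ≤ lam) (hb : 0 ≤ b)
    (g : ℝ → ℝ)
    (hconc : ConcaveOn ℝ Set.univ (fun s => g s - lam / 2 * s ^ 2))
    (hlower : ∀ s : ℝ, g 0 + a * s - b / 2 * s ^ 2 ≤ g s) :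
    ∀ ℓ : ℝ, 0 ≤ ℓ →
      ∃ d : ℝ, HasDerivWithinAt g d (Set.Ioi ℓ) ℓ ∧ a - (lam + 2 * b) * ℓ ≤ d := by
  intro ℓ hℓ
  set φ : ℝ → ℝ := fun s => g s - lam / 2 * s ^ 2 with hφ
  have hlow : ∀ s : ℝ, φ 0 + a * s - (lam + b) / 2 * s ^ 2 ≤ φ s := by
    intro s
    simp only [hφ]
    linarith [hlower s]
  obtain ⟨p, hp⟩ : ∃ p : ℝ, HasDerivWithinAt φ p (Set.Ioi ℓ) ℓ := by
    have h := (hconc.neg.hasDerivWithinAt_rightDeriv_of_mem_interior (x := ℓ) (by simp)).neg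
    rw [neg_neg] at h
    exact ⟨_, h⟩
  -- The right derivative dominates all slopes of the concave function to the right of `ℓ`.
  have hpslope : ∀ s : ℝ, ℓ < s → φ s - φ ℓ ≤ p * (s - ℓ) := by
    intro s hs
    have h := hconc.slope_le_of_hasDerivWithinAt_Ioi (Set.mem_univ ℓ) (Set.mem_univ s) hs hp
    rwa [slope_def_field, div_le_iff₀ (sub_pos.mpr hs)] at h
  have hpbound : a - 2 * (lam + b) * ℓ ≤ p := by
    rcases hℓ.eq_or_lt with rfl | hpos
    · refine le_of_forall_pos_le_add_half_mul (c := lam + b) fun s hs => ?_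
      refine le_of_mul_le_mul_right ?_ hs
      linarith [hpslope s hs, hlow s]
    · refine le_of_mul_le_mul_right ?_ hpos
      linarith [hpslope (2 * ℓ) (by linarith), hlow (2 * ℓ),
        concave_le_tangent_of_parabola_le hconc hlow hpos]
  refine ⟨p + lam * ℓ, ?_, by linarith⟩
  have hq : HasDerivAt (fun s : ℝ => lam / 2 * s ^ 2) (lam * ℓ) ℓ :=
    ((hasDerivAt_pow 2 ℓ).const_mul (lam / 2)).congr_deriv (by norm_num; ring)
  refine (hp.add hq.hasDerivWithinAt).congr_of_eventuallyEq (.of_forall fun s => ?_) ?_ <;>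
    simp [hφ]
end
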